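/- Let (U,d) be a nonempty finite metric space with diameter D := max_{a,b ∈ U} d(a,b), let A, B partition U with A nonempty, let 1 ≤ k ≤ |A|, let 1 ≤ m, and let x_1,…,x_m be new points not in U. Set U' := U ∪ {x_1,…,x_m} with d' extending d by d'(x_i,y) = d'(y,x_i) := 3D+1 for each i and every y ∈ U' \ {x_i}. Call S' ⊆ U' fair-feasible if |S' ∩ A| = k and |S' ∩ (B ∪ {x_1,…,x_m})| = m. Then the minimum of max_{u ∈ U'} min_{s ∈ S'} d'(u,s) over all fair-feasible S' equals the minimum of max_{u ∈ U} min_{s ∈ S} d(u,s) over all S ⊆ A with |S| = k, and every fair-feasible S' attaining this minimum contains all of x_1,…,x_m. -/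

import Mathlib

/-!
A fair-feasible set that misses some `x_i` leaves that point at distance `3D + 1` from every center,
so it costs at least `3D + 1` (`le_kcost_of_far`), whereas any nonempty set of centers in `U` costs
at most `D` on `U`. A fair-feasible set containing all the `x_i` spends its whole second budget `m`
on them, so it is `S ∪ {x_1, …, x_m}` for a `k`-subset `S` of `A`; its cost is that of `S` on `U`
(`kcost_adjoin`), since the `x_i` serve themselves for free and are farther from a point of `U`
than any center in `S`. Hence the fair costs are the costs of the `k`-subsets of `A`, all at most `D`,
together with values that are at least `3D + 1`, so the two infima agree and no set missing some
`x_i` attains them.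
-/

/-- The k-center clustering cost of a (nonempty) set `S` of centers on a (finite,
nonempty) space `X` with distance `dist`: the maximum over clients `u : X` of the
distance from `u` to its nearest center in `S`. -/
noncomputable def kcost {X : Type*} (dist : X → X → ℝ) (S : Finset X) : ℝ :=
  ⨆ u : X, ⨅ s : S, dist u (s : X)

/-- Both extrema in `kcost` are attained, so a bound on the cost is a covering condition. -/
lemma kcost_le_iff {X : Type*} [Finite X] [Nonempty X] (dist : X → X → ℝ) {S : Finset X}
    (hS : S.Nonempty) (c : ℝ) : kcost dist S ≤ c ↔ ∀ u, ∃ s ∈ S, dist u s ≤ c := by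
  have : Nonempty S := hS.to_subtype
  unfold kcost
  rw [ciSup_le_iff (Set.finite_range _).bddAbove]
  refine forall_congr' fun u => ⟨fun h => ?_, ?_⟩
  · obtain ⟨s, hs⟩ := exists_eq_ciInf_of_finite (f := fun s : S => dist u (s : X))
    exact ⟨s, s.2, hs.trans_le h⟩
  · rintro ⟨s, hs, h⟩
    exact ciInf_le_of_le (Set.finite_range _).bddBelow (⟨s, hs⟩ : S) h

lemma kcost_nonneg {X : Type*} (dist : X → X → ℝ) (h : ∀ a b, 0 ≤ dist a b) (S : Finset X) :
    0 ≤ kcost dist S :=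
  Real.iSup_nonneg fun u => Real.iInf_nonneg fun s => h u s

/-- A client all of whose distances to the centers are at least `r` forces the cost to be at
least `r`. -/
lemma le_kcost_of_far {X : Type*} [Finite X] [Nonempty X] (dist : X → X → ℝ) {S : Finset X}
    (hS : S.Nonempty) {r : ℝ} (u : X) (h : ∀ s ∈ S, r ≤ dist u s) : r ≤ kcost dist S := by
  obtain ⟨s, hs, hle⟩ := (kcost_le_iff dist hS _).1 le_rfl u
  exact (h s hs).trans hle

/-- Adjoining points `Sum.inr i` at a distance `r` no less than any distance in `U`, and opening all
of them as centers, does not change the cost. -/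
lemma kcost_adjoin {U I : Type*} [Finite U] [Nonempty U] [Finite I]
    (d : U → U → ℝ) (d' : U ⊕ I → U ⊕ I → ℝ) (r : ℝ)
    (hd0 : ∀ a b, 0 ≤ d a b) (hdr : ∀ a b, d a b ≤ r)
    (hUU : ∀ u v : U, d' (Sum.inl u) (Sum.inl v) = d u v)
    (hxx : ∀ i : I, d' (Sum.inr i) (Sum.inr i) = 0)
    (hux : ∀ (u : U) (i : I), d' (Sum.inl u) (Sum.inr i) = r)
    {S : Finset U} (hS : S.Nonempty) {S' : Finset (U ⊕ I)}
    (hl : ∀ u, Sum.inl u ∈ S' ↔ u ∈ S) (hr : ∀ i, Sum.inr i ∈ S') :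
    kcost d' S' = kcost d S := by
  obtain ⟨s₀, hs₀⟩ := hS
  have hS' : S'.Nonempty := ⟨Sum.inl s₀, (hl s₀).2 hs₀⟩
  refine eq_of_forall_ge_iff fun c => ⟨fun h => ?_, fun h => ?_⟩
  · refine (kcost_le_iff d ⟨s₀, hs₀⟩ c).2 fun u => ?_
    obtain ⟨s | i, hs, hle⟩ := (kcost_le_iff d' hS' c).1 h (Sum.inl u)
    · exact ⟨s, (hl s).1 hs, by rwa [hUU] at hle⟩
    · exact ⟨s₀, hs₀, (hdr u s₀).trans (by rwa [hux] at hle)⟩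
  · have hc : 0 ≤ c := (kcost_nonneg d hd0 S).trans h
    refine (kcost_le_iff d' hS' c).2 ?_
    rintro (u | i)
    · obtain ⟨s, hs, hle⟩ := (kcost_le_iff d ⟨s₀, hs₀⟩ c).1 h u
      exact ⟨Sum.inl s, (hl s).2 hs, by rwa [hUU]⟩
    · exact ⟨Sum.inr i, hr i, by rwa [hxx]⟩

/-- A set meeting `B ∪ {x_1, …, x_m}` in `m` points and containing every `x_i` contains no point
of `B`. -/
lemma inl_notMem_of_card {U : Type*} [DecidableEq U] {m : ℕ} {B : Finset U}
    {S' : Finset (U ⊕ Fin m)}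
    (hcard : (S' ∩ (B.image Sum.inl ∪
      Finset.univ.image (Sum.inr : Fin m → U ⊕ Fin m))).card = m)
    (hr : ∀ i : Fin m, Sum.inr i ∈ S') {b : U} (hb : b ∈ B) : Sum.inl b ∉ S' := by
  intro hbS
  have hsub : Finset.univ.image (Sum.inr : Fin m → U ⊕ Fin m) ⊆
      S' ∩ (B.image Sum.inl ∪ Finset.univ.image (Sum.inr : Fin m → U ⊕ Fin m)) := by
    intro y hy
    obtain ⟨i, -, rfl⟩ := Finset.mem_image.1 hy
    simp [hr i]
  have hEq := Finset.eq_of_subset_of_card_le hsub (by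
    rw [hcard, Finset.card_image_of_injective _ Sum.inr_injective, Finset.card_fin])
  have hmem : (Sum.inl b : U ⊕ Fin m) ∈ Finset.univ.image (Sum.inr : Fin m → U ⊕ Fin m) := by
    rw [hEq]
    simp [hbS, hb]
  simp at hmem

/-- Let `U = A ∪ B` (disjoint), `A` nonempty, `1 ≤ k ≤ |A|`, `1 ≤ m`,
and adjoin `m` new points `x_1, …, x_m` (modeled as `Sum.inr i`), each at distance
`3D + 1` from every other point of `U' = U ⊕ Fin m`.  A set `S' ⊆ U'` is
fair-feasible if `|S' ∩ A| = k` and `|S' ∩ (B ∪ {x_1, …, x_m})| = m`.  Then the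
minimum clustering cost over fair-feasible sets equals the minimum clustering cost
(on `U`) over `S ⊆ A` with `|S| = k`, and every fair-feasible set attaining this
minimum contains all of `x_1, …, x_m`. -/
theorem fair_kcenter_general_requirement_opt_eq
    {U : Type*} [Fintype U] [Nonempty U] [DecidableEq U] (d : U → U → ℝ)
    (hsymm : ∀ a b : U, d a b = d b a)
    (heq : ∀ a b : U, d a b = 0 ↔ a = b)
    (htri : ∀ a b c : U, d a c ≤ d a b + d b c)
    (D : ℝ) (hD : D = ⨆ p : U × U, d p.1 p.2)
    (A B : Finset U) (hA : A.Nonempty) (hdisj : Disjoint A B)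
    (hunion : A ∪ B = Finset.univ)
    (k : ℕ) (hk1 : 1 ≤ k) (hk2 : k ≤ A.card)
    (m : ℕ) (hm : 1 ≤ m)
    (d' : (U ⊕ Fin m) → (U ⊕ Fin m) → ℝ)
    (hUU : ∀ u v : U, d' (Sum.inl u) (Sum.inl v) = d u v)
    (hxx : ∀ i : Fin m, d' (Sum.inr i) (Sum.inr i) = 0)
    (hxy : ∀ (i : Fin m) (y : U ⊕ Fin m), y ≠ Sum.inr i → d' (Sum.inr i) y = 3 * D + 1)
    (hyx : ∀ (i : Fin m) (y : U ⊕ Fin m), y ≠ Sum.inr i → d' y (Sum.inr i) = 3 * D + 1) :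
    sInf {c : ℝ | ∃ S' : Finset (U ⊕ Fin m),
        (S' ∩ A.image Sum.inl).card = k ∧
        (S' ∩ (B.image Sum.inl ∪ Finset.univ.image (Sum.inr : Fin m → U ⊕ Fin m))).card = m ∧
        c = kcost d' S'} =
    sInf {c : ℝ | ∃ S : Finset U, S ⊆ A ∧ S.card = k ∧ c = kcost d S} ∧
    (∀ S' : Finset (U ⊕ Fin m),
      (S' ∩ A.image Sum.inl).card = k →
      (S' ∩ (B.image Sum.inl ∪ Finset.univ.image (Sum.inr : Fin m → U ⊕ Fin m))).card = m →
      kcost d' S' = sInf {c : ℝ | ∃ S'' : Finset (U ⊕ Fin m),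
        (S'' ∩ A.image Sum.inl).card = k ∧
        (S'' ∩ (B.image Sum.inl ∪ Finset.univ.image (Sum.inr : Fin m → U ⊕ Fin m))).card = m ∧
        c = kcost d' S''} →
      ∀ i : Fin m, Sum.inr i ∈ S') := by
  have hself : ∀ a, d a a = 0 := fun a => (heq a a).2 rfl
  have hd0 : ∀ a b, 0 ≤ d a b := fun a b => by
    have h := htri a b a
    rw [hself, hsymm b a] at h
    linarith
  have hdD : ∀ a b, d a b ≤ D := fun a b => by
    rw [hD]
    exact le_ciSup (f := fun p : U × U => d p.1 p.2) (Set.finite_range _).bddAbove (a, b)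
  have hD0 : 0 ≤ D := by
    obtain ⟨a, -⟩ := hA
    exact (hd0 a a).trans (hdD a a)
  have hd'0 : ∀ y z, 0 ≤ d' y z := by
    intro y z
    rcases y with u | i
    · rcases z with v | j
      · rw [hUU]; exact hd0 u v
      · rw [hyx j _ (by simp)]; linarith
    · by_cases hz : z = Sum.inr i
      · rw [hz, hxx]
      · rw [hxy i z hz]; linarith
  have hadj : ∀ (S : Finset U) (S' : Finset (U ⊕ Fin m)), S.Nonempty →
      (∀ u, Sum.inl u ∈ S' ↔ u ∈ S) → (∀ i, Sum.inr i ∈ S') → kcost d' S' = kcost d S :=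
    fun S S' hS hl hr => kcost_adjoin d d' (3 * D + 1) hd0
      (fun a b => (hdD a b).trans (by linarith)) hUU hxx (fun u i => hyx i _ (by simp)) hS hl hr
  have hTD : ∀ S : Finset U, S.card = k → kcost d S ≤ D := fun S hS => by
    obtain ⟨s, hs⟩ : S.Nonempty := Finset.card_pos.1 (by omega)
    exact (kcost_le_iff d ⟨s, hs⟩ D).2 fun u => ⟨s, hs, hdD u s⟩
  have hfar : ∀ S' : Finset (U ⊕ Fin m), (S' ∩ A.image Sum.inl).card = k →
      ∀ i : Fin m, Sum.inr i ∉ S' → 3 * D + 1 ≤ kcost d' S' := by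
    intro S' hcard i hi
    obtain ⟨s, hs⟩ : (S' ∩ A.image Sum.inl).Nonempty := Finset.card_pos.1 (by omega)
    refine le_kcost_of_far d' ⟨s, (Finset.mem_inter.1 hs).1⟩ (Sum.inr i) fun t ht => ?_
    rw [hxy i t (by rintro rfl; exact hi ht)]
  set F := {c : ℝ | ∃ S' : Finset (U ⊕ Fin m),
        (S' ∩ A.image Sum.inl).card = k ∧
        (S' ∩ (B.image Sum.inl ∪ Finset.univ.image (Sum.inr : Fin m → U ⊕ Fin m))).card = m ∧
        c = kcost d' S'} with hF
  set T := {c : ℝ | ∃ S : Finset U, S ⊆ A ∧ S.card = k ∧ c = kcost d S} with hT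
  have hTne : T.Nonempty := by
    obtain ⟨S, hSA, hSk⟩ := Finset.exists_subset_card_eq hk2
    exact ⟨_, S, hSA, hSk, rfl⟩
  have hTbdd : BddBelow T := ⟨0, by
    rintro _ ⟨S, -, -, rfl⟩
    exact kcost_nonneg d hd0 S⟩
  have hFbdd : BddBelow F := ⟨0, by
    rintro _ ⟨S, -, -, rfl⟩
    exact kcost_nonneg d' hd'0 S⟩
  have hTF : T ⊆ F := by
    rintro _ ⟨S, hSA, hSk, rfl⟩
    refine ⟨S.image Sum.inl ∪ Finset.univ.image Sum.inr, ?_, ?_, ?_⟩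
    · have h : (S.image Sum.inl ∪ Finset.univ.image Sum.inr) ∩ A.image Sum.inl =
          S.image (Sum.inl : U → U ⊕ Fin m) := by
        ext (u | i)
        · simpa using fun hu => hSA hu
        · simp
      rw [h, Finset.card_image_of_injective _ Sum.inl_injective, hSk]
    · have h : (S.image Sum.inl ∪ Finset.univ.image Sum.inr) ∩
          (B.image Sum.inl ∪ Finset.univ.image Sum.inr) =
          Finset.univ.image (Sum.inr : Fin m → U ⊕ Fin m) := by
        ext (u | i)
        · simpa using fun hu => Finset.disjoint_left.1 hdisj (hSA hu)
        · simp
      rw [h, Finset.card_image_of_injective _ Sum.inr_injective, Finset.card_fin]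
    · exact (hadj S _ (Finset.card_pos.1 (by omega)) (by simp) (by simp)).symm
  have hTinf : sInf T ≤ D := by
    obtain ⟨_, S, hSA, hSk, rfl⟩ := hTne
    exact (csInf_le hTbdd ⟨S, hSA, hSk, rfl⟩).trans (hTD S hSk)
  have hmain : sInf F = sInf T := by
    refine le_antisymm (csInf_le_csInf hFbdd hTne hTF) (le_csInf (hTne.mono hTF) ?_)
    rintro _ ⟨S', hSk, hSm, rfl⟩
    by_cases hr : ∀ i : Fin m, Sum.inr i ∈ S'
    · have himg : (A.filter fun u => (Sum.inl u : U ⊕ Fin m) ∈ S').image Sum.inl =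
          S' ∩ A.image Sum.inl := by
        ext (u | i)
        · simp [and_comm]
        · simp
      have hcard : (A.filter fun u => (Sum.inl u : U ⊕ Fin m) ∈ S').card = k := by
        rw [← hSk, ← himg, Finset.card_image_of_injective _ Sum.inl_injective]
      refine csInf_le hTbdd ⟨_, Finset.filter_subset _ A, hcard, ?_⟩
      refine hadj _ S' (Finset.card_pos.1 (by omega)) (fun u => ?_) hr
      rw [Finset.mem_filter]
      refine ⟨fun hu => ⟨?_, hu⟩, fun hu => hu.2⟩
      have hAB : u ∈ A ∪ B := hunion ▸ Finset.mem_univ u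
      exact (Finset.mem_union.1 hAB).resolve_right fun hb => inl_notMem_of_card hSm hr hb hu
    · push Not at hr
      obtain ⟨i, hi⟩ := hr
      linarith [hfar S' hSk i hi]
  refine ⟨hmain, fun S' hSk _ hopt i => ?_⟩
  by_contra hi
  linarith [hfar S' hSk i hi]
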